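/- Let X be a strictly stable random variable with parameters (ν, θ, τ). Then E[(log|X|)⁵] = τ⁵ + 10τ³·DV + 20τ²·ζ(3)(ν^{3/2} − 1) + 15τ·DV² + 5τ·π⁴((1 − θ⁴)/8 + (ν² − 1)/15) + 20ζ(3)(ν^{3/2} − 1)·DV + 24ζ(5)(ν^{5/2} − 1). -/

import Mathlib

open MeasureTheory ProbabilityTheory

/-- The real value of the Riemann zeta function at a real argument. -/
noncomputable def zetaR (s : ℝ) : ℝ := (riemannZeta (s : ℂ)).re

/-- A real random variable `X` is strictly stable with parameters `(ν, θ, τ)` if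
`ν ≥ 1/4`, `|θ| ≤ min 1 (2√ν − 1)`, `P(X = 0) = 0`, `log |X|` has finite absolute
moments of every order, and the characteristic function of `X` is
`E[exp(i k X)] = exp(−exp(ν^{−1/2}(log|k| + τ − i(π/2)θ sign k) + C(ν^{−1/2} − 1)))`
for all real `k ≠ 0`, where `C` is the Euler–Mascheroni constant. -/
def IsStrictlyStable {Ω : Type*} [MeasureSpace Ω] (X : Ω → ℝ) (ν θ τ : ℝ) : Prop :=
  Measurable X ∧ (1/4 : ℝ) ≤ ν ∧ |θ| ≤ min 1 (2 * Real.sqrt ν - 1) ∧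
  (ℙ : Measure Ω) {ω | X ω = 0} = 0 ∧
  (∀ p : ℕ, Integrable (fun ω => (abs (Real.log (abs (X ω)))) ^ p)) ∧
  ∀ k : ℝ, k ≠ 0 →
    (∫ ω, Complex.exp (Complex.I * (k : ℂ) * (X ω : ℂ))) =
      Complex.exp (-Complex.exp
        (((ν ^ (-(1/2) : ℝ) : ℝ) : ℂ) *
            (((Real.log |k| : ℝ) : ℂ) + (τ : ℂ) -
              Complex.I * ((Real.pi / 2 : ℝ) : ℂ) * (θ : ℂ) * ((Real.sign k : ℝ) : ℂ)) +
          ((Real.eulerMascheroniConstant : ℝ) : ℂ) * (((ν ^ (-(1/2) : ℝ) : ℝ) : ℂ) - 1)))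

section
open Set Filter Topology

lemma ss_real_int (a r : ℝ) (ha : 0 < a) (hr : 0 < r) :
    IntegrableOn (fun t : ℝ => t ^ (a-1) * Real.exp (-(r*t))) (Ioi 0) := by
  apply Integrable.of_integral_ne_zero
  rw [Real.integral_rpow_mul_exp_neg_mul_Ioi ha hr]
  have := Real.Gamma_pos_of_pos ha
  positivity

lemma ss_gamma (a : ℝ) (ha : 0 < a) (r : ℂ) (hr : 0 < r.re) :
    ∫ t in Ioi (0:ℝ), ((t ^ (a-1) : ℝ) : ℂ) * Complex.exp (-(r * t)) =
      Complex.exp (-(a * Complex.log r)) * (Real.Gamma a : ℂ) := by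
  set μ : Measure ℝ := (volume.restrict (Ioi (0:ℝ))).withDensity
    (fun t => ENNReal.ofReal (t ^ (a-1))) with hμ
  have hm : Measurable (fun t : ℝ => ENNReal.ofReal (t ^ (a-1))) := by fun_prop
  have hI : ∀ z : ℂ, complexMGF id μ z =
      ∫ t in Ioi (0:ℝ), ((t ^ (a-1) : ℝ) : ℂ) * Complex.exp (z * t) := by
    intro z
    rw [complexMGF, hμ, integral_withDensity_eq_integral_toReal_smul hm (by simp)]
    refine setIntegral_congr_fun measurableSet_Ioi fun t ht => ?_
    have : (0:ℝ) ≤ t ^ (a-1) := Real.rpow_nonneg (le_of_lt ht) _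
    simp [ENNReal.toReal_ofReal this]
  have hset : Iio (0:ℝ) ⊆ integrableExpSet id μ := by
    intro t ht
    rw [integrableExpSet, mem_ofPred_eq, hμ, integrable_withDensity_iff_integrable_smul' hm (by simp)]
    refine (ss_real_int a (-t) ha (by simpa using ht)).congr_fun (fun x hx => ?_) measurableSet_Ioi
    have : (0:ℝ) ≤ x ^ (a-1) := Real.rpow_nonneg (le_of_lt hx) _
    simp [ENNReal.toReal_ofReal this]
  have hint : Iio (0:ℝ) ⊆ interior (integrableExpSet id μ) :=
    interior_maximal hset isOpen_Iio
  let U : Set ℂ := {z | z.re < 0}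
  have hU : IsOpen U := isOpen_Iio.preimage Complex.continuous_re
  have hUc : IsPreconnected U := (convex_halfSpace_re_lt 0).isPreconnected
  have h1 : AnalyticOnNhd ℂ (complexMGF id μ) U := fun z hz => analyticAt_complexMGF (hint hz)
  have h2 : AnalyticOnNhd ℂ (fun z => Complex.exp (-(a * Complex.log (-z))) * (Real.Gamma a : ℂ)) U := by
    apply DifferentiableOn.analyticOnNhd _ hU
    intro z hz
    have hz' : -z ∈ Complex.slitPlane := Or.inl (by simpa [U] using hz)
    apply DifferentiableAt.differentiableWithinAt
    fun_prop (disch := assumption)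
  have h3 : ∀ x : ℝ, x < 0 → complexMGF id μ (x:ℂ) = Complex.exp (-(a * Complex.log (-(x:ℂ)))) * (Real.Gamma a : ℂ) := by
    intro x hx
    rw [hI]
    have := Real.integral_rpow_mul_exp_neg_mul_Ioi ha (neg_pos.2 hx)
    have h4 : ((1 / -x) ^ a : ℝ) = Real.exp (-(a * Real.log (-x))) := by
      rw [Real.rpow_def_of_pos (by simpa using hx)]
      simp [Real.log_neg_eq_log, mul_comm]
    rw [h4] at this
    have := congrArg (fun y : ℝ => (y:ℂ)) this
    simp only [Complex.ofReal_mul] at this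
    rw [← integral_complex_ofReal] at this
    push_cast [Complex.ofReal_log (neg_pos.2 hx).le] at this
    rw [← this]
    simp
  have := h1.eqOn_of_preconnected_of_frequently_eq h2 hUc (z₀ := -1) (by simp [U]) ?_
  · have := this (x := -r) (by simpa [U] using hr)
    rw [hI] at this
    simpa using this
  · have ht : Tendsto (fun x : ℝ => (x : ℂ)) (𝓝[≠] (-1)) (𝓝[≠] (-1:ℂ)) := by
      apply tendsto_nhdsWithin_of_tendsto_nhds_of_eventually_within
      · have : Tendsto (fun x : ℝ => (x : ℂ)) (𝓝 (-1)) (𝓝 ((-1:ℝ):ℂ)) := Complex.continuous_ofReal.tendsto _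
        simpa using this.mono_left nhdsWithin_le_nhds
      · filter_upwards [self_mem_nhdsWithin] with x hx
        simp only [mem_compl_iff, mem_singleton_iff] at hx ⊢
        intro h; apply hx; exact_mod_cast h
    apply ht.frequently
    apply Eventually.frequently
    have : ∀ᶠ x : ℝ in 𝓝[≠] (-1), x < 0 := nhdsWithin_le_nhds (Iio_mem_nhds (by norm_num))
    filter_upwards [this] with x hx using h3 x hx
lemma ss_stretch (s α : ℝ) (hs : 0 < s) (hα : 0 < α) (c : ℂ) (hc : 0 < c.re) :
    ∫ k in Ioi (0:ℝ), ((k ^ (s-1) : ℝ) : ℂ) * Complex.exp (-(c * ((k ^ α : ℝ) : ℂ))) =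
      ((1 / α : ℝ) : ℂ) * (Complex.exp (-((s / α : ℝ) * Complex.log c)) * (Real.Gamma (s / α) : ℂ)) := by
  have hsub := integral_comp_rpow_Ioi_of_pos (g := fun t : ℝ => ((t ^ (s/α-1) : ℝ) : ℂ) * Complex.exp (-(c * t))) hα
  rw [← ss_gamma (s/α) (by positivity) c hc, ← hsub, ← integral_const_mul]
  refine setIntegral_congr_fun measurableSet_Ioi fun k hk => ?_
  have hk : 0 < k := hk
  simp only [Complex.real_smul]
  rw [← mul_assoc, ← mul_assoc, ← Complex.ofReal_mul, ← Complex.ofReal_mul]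
  congr 2
  rw [← Real.rpow_mul hk.le]
  have : k ^ (s-1) = k ^ (α - 1) * k ^ (α * (s/α - 1)) := by
    rw [← Real.rpow_add hk]; congr 1; field_simp; ring
  rw [this]; field_simp

lemma ss_stretch_int (s α : ℝ) (hs : 0 < s) (hα : 0 < α) (c : ℂ) (hc : 0 < c.re) :
    IntegrableOn (fun k : ℝ => ((k ^ (s-1) : ℝ) : ℂ) * Complex.exp (-(c * ((k ^ α : ℝ) : ℂ)))) (Ioi 0) := by
  apply Integrable.of_integral_ne_zero
  rw [ss_stretch s α hs hα c hc]
  have := Real.Gamma_pos_of_pos (div_pos hs hα)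
  refine mul_ne_zero (by simp [hα.ne']) (mul_ne_zero (Complex.exp_ne_zero _) (by exact_mod_cast this.ne'))

/-- regularised kernel -/
noncomputable def ssq (s ε x : ℝ) : ℝ := (Complex.exp (-(s * Complex.log (ε - Complex.I * x)))).re

lemma ssq_eq (s ε x : ℝ) : ssq s ε x =
    Real.exp (-(s * Real.log ‖(ε - Complex.I * x : ℂ)‖)) * Real.cos (s * (ε - Complex.I * x : ℂ).arg) := by
  simp [ssq, Complex.exp_re, Complex.log_re, Complex.log_im]

lemma ssq_nonneg (s ε x : ℝ) (hs : 0 < s) (hs1 : s < 1) (hε : 0 < ε) : 0 ≤ ssq s ε x := by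
  rw [ssq_eq]
  have h : |(ε - Complex.I * x : ℂ).arg| ≤ Real.pi / 2 := by
    rw [Complex.abs_arg_le_pi_div_two_iff]; simpa using hε.le
  have := Real.pi_pos
  have h2 := abs_le.1 h
  apply mul_nonneg (Real.exp_pos _).le
  apply Real.cos_nonneg_of_neg_pi_div_two_le_of_le <;> nlinarith

lemma ssq_le (s ε x : ℝ) (hs : 0 < s) (hx : x ≠ 0) :
    |ssq s ε x| ≤ Real.exp (s * -Real.log |x|) := by
  rw [ssq_eq, abs_mul, abs_of_pos (Real.exp_pos _)]
  have h1 : |x| ≤ ‖(ε - Complex.I * x : ℂ)‖ := by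
    have := Complex.abs_im_le_norm (ε - Complex.I * x : ℂ)
    simpa using this
  have h2 := Real.log_le_log (abs_pos.2 hx) h1
  calc _ ≤ Real.exp (-(s * Real.log ‖(ε - Complex.I * x : ℂ)‖)) * 1 := by
        gcongr; exact Real.abs_cos_le_one _
    _ ≤ _ := by
        rw [mul_one]; apply Real.exp_le_exp.2; nlinarith

lemma ssq_tendsto (s x : ℝ) (hx : x ≠ 0) :
    Tendsto (fun n : ℕ => ssq s (1 / ((n:ℝ) + 1)) x) atTop
      (𝓝 (Real.exp (s * -Real.log |x|) * Real.cos (Real.pi / 2 * s))) := by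
  have h0 : ssq s 0 x = Real.exp (s * -Real.log |x|) * Real.cos (Real.pi / 2 * s) := by
    rw [ssq_eq]
    congr 1
    · simp
    · rcases lt_or_gt_of_ne hx with h | h
      · have : ((0:ℝ) - Complex.I * x : ℂ) = ((-x : ℝ) : ℂ) * Complex.I := by push_cast; ring
        rw [this, Complex.arg_real_mul _ (by linarith), Complex.arg_I]; ring_nf
      · have : ((0:ℝ) - Complex.I * x : ℂ) = ((x : ℝ) : ℂ) * (-Complex.I) := by push_cast; ring
        rw [this, Complex.arg_real_mul _ (by linarith), Complex.arg_neg_I, ← Real.cos_neg]; ring_nf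
  rw [← h0]
  have hc : ContinuousAt (fun ε : ℝ => ssq s ε x) 0 := by
    unfold ssq
    have : ((0:ℝ) - Complex.I * x : ℂ) ∈ Complex.slitPlane := Or.inr (by simpa using hx)
    have h1 : ContinuousAt (fun ε : ℝ => Complex.log (ε - Complex.I * x)) 0 := by
      exact ContinuousAt.clog (f := fun ε : ℝ => ((ε : ℂ) - Complex.I * x)) (by fun_prop) this
    fun_prop
  exact hc.tendsto.comp tendsto_one_div_add_atTop_nhds_zero_nat

lemma ssq_meas (s ε : ℝ) : Measurable (fun x : ℝ => ssq s ε x) := by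
  unfold ssq
  fun_prop

lemma ss_fubini {Ω : Type*} [MeasurableSpace Ω] (μ : Measure Ω) [IsProbabilityMeasure μ]
    (X : Ω → ℝ) (hX : Measurable X) (s ε : ℝ) (hs : 0 < s) (hε : 0 < ε) :
    Integrable (fun ω => ssq s ε (X ω)) μ ∧ (∫ ω, ssq s ε (X ω) ∂μ) * Real.Gamma s =
      (∫ k in Ioi (0:ℝ), ((k ^ (s-1) * Real.exp (-(ε * k)) : ℝ) : ℂ) *
        ∫ ω, Complex.exp (Complex.I * k * X ω) ∂μ).re := by
  have hg : 0 < Real.Gamma s := Real.Gamma_pos_of_pos hs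
  have hint : Integrable (fun p : ℝ × Ω => ((p.1 ^ (s-1) * Real.exp (-(ε * p.1)) : ℝ) : ℂ) *
      Complex.exp (Complex.I * p.1 * X p.2)) ((volume.restrict (Ioi (0:ℝ))).prod μ) := by
    have h1 : Integrable (fun p : ℝ × Ω => p.1 ^ (s-1) * Real.exp (-(ε * p.1)))
      ((volume.restrict (Ioi (0:ℝ))).prod μ) := (ss_real_int s ε hs hε).comp_fst μ
    refine h1.mono (by fun_prop) (ae_of_all _ fun p => ?_)
    rw [norm_mul, Complex.norm_real]
    have : ‖Complex.exp (Complex.I * p.1 * X p.2)‖ = 1 := by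
      rw [Complex.norm_exp]; simp
    rw [this, mul_one]
  have hpt : ∀ ω, ∫ k in Ioi (0:ℝ), ((k ^ (s-1) * Real.exp (-(ε * k)) : ℝ) : ℂ) *
      Complex.exp (Complex.I * k * X ω) =
      Complex.exp (-(s * Complex.log (ε - Complex.I * X ω))) * (Real.Gamma s : ℂ) := by
    intro ω
    rw [← ss_gamma s hs _ (by simpa using hε)]
    refine setIntegral_congr_fun measurableSet_Ioi fun k hk => ?_
    push_cast
    rw [mul_assoc, ← Complex.exp_add]
    congr 2; ring
  have hI2 := hint.integral_prod_right
  simp only [hpt] at hI2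
  have hI3 : Integrable (fun ω => Complex.exp (-(s * Complex.log (ε - Complex.I * X ω)))) μ := by
    have := hI2.mul_const ((Real.Gamma s : ℂ)⁻¹)
    refine this.congr (ae_of_all _ fun ω => ?_)
    simp only
    rw [mul_assoc, mul_inv_cancel₀ (by exact_mod_cast hg.ne'), mul_one]
  refine ⟨hI3.re, ?_⟩
  have hsw := integral_integral_swap (f := fun (k : ℝ) ω => ((k ^ (s-1) * Real.exp (-(ε * k)) : ℝ) : ℂ) *
      Complex.exp (Complex.I * k * X ω)) hint
  simp only [hpt, integral_const_mul] at hsw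
  rw [hsw, integral_mul_const]
  have : (∫ ω, ssq s ε (X ω) ∂μ) = (∫ ω, Complex.exp (-(s * Complex.log (ε - Complex.I * X ω))) ∂μ).re :=
    integral_re hI3
  rw [this, Complex.re_mul_ofReal]

lemma ss_mellin {Ω : Type*} [MeasurableSpace Ω] (μ : Measure Ω) [IsProbabilityMeasure μ]
    (X : Ω → ℝ) (hX : Measurable X) (hX0 : ∀ᵐ ω ∂μ, X ω ≠ 0) (s α : ℝ) (hs : 0 < s) (hs1 : s < 1)
    (hα : 0 < α) (c : ℂ) (hc : 0 < c.re)
    (hφ : ∀ k : ℝ, 0 < k → ∫ ω, Complex.exp (Complex.I * k * X ω) ∂μ =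
      Complex.exp (-(c * ((k ^ α : ℝ) : ℂ)))) :
    Integrable (fun ω => Real.exp (s * -Real.log |X ω|)) μ ∧
    (∫ ω, Real.exp (s * -Real.log |X ω|) ∂μ) * Real.cos (Real.pi / 2 * s) * Real.Gamma s =
      1 / α * (Complex.exp (-((s / α : ℝ) * Complex.log c))).re * Real.Gamma (s / α) := by
  have hg : 0 < Real.Gamma s := Real.Gamma_pos_of_pos hs
  have hcos : 0 < Real.cos (Real.pi / 2 * s) := by
    have := Real.pi_pos
    apply Real.cos_pos_of_mem_Ioo; constructor <;> nlinarith
  let e : ℕ → ℝ := fun n => 1 / ((n:ℝ) + 1)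
  have he : ∀ n, 0 < e n := fun n => by positivity
  set V := 1 / α * (Complex.exp (-((s / α : ℝ) * Complex.log c))).re * Real.Gamma (s / α) with hV
  have hJ : Tendsto (fun n => ∫ k in Ioi (0:ℝ), ((k ^ (s-1) * Real.exp (-(e n * k)) : ℝ) : ℂ) *
        ∫ ω, Complex.exp (Complex.I * k * X ω) ∂μ) atTop (𝓝 (∫ k in Ioi (0:ℝ), ((k ^ (s-1) : ℝ) : ℂ) *
          Complex.exp (-(c * ((k ^ α : ℝ) : ℂ))))) := by
    have hcg : ∀ n, (∫ k in Ioi (0:ℝ), ((k ^ (s-1) * Real.exp (-(e n * k)) : ℝ) : ℂ) *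
        ∫ ω, Complex.exp (Complex.I * k * X ω) ∂μ) = ∫ k in Ioi (0:ℝ),
        ((k ^ (s-1) * Real.exp (-(e n * k)) : ℝ) : ℂ) * Complex.exp (-(c * ((k ^ α : ℝ) : ℂ))) := by
      intro n
      refine setIntegral_congr_fun measurableSet_Ioi fun k hk => ?_
      simp only [hφ k hk]
    simp only [hcg]
    refine tendsto_integral_of_dominated_convergence (fun k => ‖((k ^ (s-1) : ℝ) : ℂ) *
          Complex.exp (-(c * ((k ^ α : ℝ) : ℂ)))‖) (fun n => by fun_prop)
          (ss_stretch_int s α hs hα c hc).norm (fun n => ?_) ?_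
    · refine (ae_restrict_iff' measurableSet_Ioi).2 (ae_of_all _ fun k hk => ?_)
      rw [norm_mul, norm_mul, Complex.norm_real, Complex.norm_real, norm_mul]
      gcongr
      have : ‖Real.exp (-(e n * k))‖ ≤ 1 := by
        rw [Real.norm_eq_abs, Real.abs_exp, Real.exp_le_one_iff]
        have := mul_pos (he n) hk
        linarith
      calc _ ≤ ‖k ^ (s-1)‖ * 1 := by gcongr
        _ = _ := mul_one _
    · refine ae_of_all _ fun k => ?_
      apply Tendsto.mul_const
      have h1 : Tendsto e atTop (𝓝 0) := tendsto_one_div_add_atTop_nhds_zero_nat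
      have h2 : Tendsto (fun n => k ^ (s-1) * Real.exp (-(e n * k))) atTop (𝓝 (k ^ (s-1) * Real.exp (-(0 * k)))) :=
        (Real.continuous_exp.tendsto _ |>.comp (h1.mul_const k).neg).const_mul _
      simp only [zero_mul, neg_zero, Real.exp_zero, mul_one] at h2
      exact (Complex.continuous_ofReal.tendsto _).comp h2
  rw [ss_stretch s α hs hα c hc] at hJ
  have hJre := (Complex.continuous_re.tendsto _).comp hJ
  have hVal : (((1 / α : ℝ) : ℂ) * (Complex.exp (-((s / α : ℝ) * Complex.log c)) * (Real.Gamma (s / α) : ℂ))).re = V := by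
    rw [Complex.re_ofReal_mul, Complex.re_mul_ofReal, hV]; ring
  rw [hVal] at hJre
  have hE : Tendsto (fun n => ∫ ω, ssq s (e n) (X ω) ∂μ) atTop (𝓝 (V / Real.Gamma s)) := by
    refine (hJre.div_const (Real.Gamma s)).congr fun n => ?_
    simp only [Function.comp]
    rw [← (ss_fubini μ X hX s (e n) hs (he n)).2]
    field_simp
  have hInt : Integrable (fun ω => Real.exp (s * -Real.log |X ω|)) μ := by
    have hm : Measurable fun ω => Real.exp (s * -Real.log |X ω|) := by fun_prop
    have h2 : Integrable (fun ω => Real.exp (s * -Real.log |X ω|) * Real.cos (Real.pi / 2 * s)) μ := by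
      refine ⟨(hm.mul_const (Real.cos (Real.pi / 2 * s))).aestronglyMeasurable, ?_⟩
      rw [hasFiniteIntegral_iff_ofReal (ae_of_all _ fun ω => by positivity)]
      have hF := lintegral_liminf_le (μ := μ) (u := atTop) (f := fun n ω => ENNReal.ofReal (ssq s (e n) (X ω)))
        (fun n => ((ssq_meas s (e n)).comp hX).ennreal_ofReal)
      have h3 : ∫⁻ ω, ENNReal.ofReal (Real.exp (s * -Real.log |X ω|) * Real.cos (Real.pi / 2 * s)) ∂μ
          = ∫⁻ ω, liminf (fun n => ENNReal.ofReal (ssq s (e n) (X ω))) atTop ∂μ := by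
        apply lintegral_congr_ae
        filter_upwards [hX0] with ω hω
        exact ((ENNReal.tendsto_ofReal (ssq_tendsto s (X ω) hω)).liminf_eq).symm
      rw [h3]
      refine lt_of_le_of_lt hF ?_
      have h4 : ∀ n, ∫⁻ ω, ENNReal.ofReal (ssq s (e n) (X ω)) ∂μ = ENNReal.ofReal (∫ ω, ssq s (e n) (X ω) ∂μ) := by
        intro n
        rw [ofReal_integral_eq_lintegral_ofReal (ss_fubini μ X hX s (e n) hs (he n)).1
          (ae_of_all _ fun ω => ssq_nonneg s (e n) _ hs hs1 (he n))]
      simp only [h4]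
      rw [(ENNReal.tendsto_ofReal hE).liminf_eq]
      exact ENNReal.ofReal_lt_top
    refine (h2.mul_const (Real.cos (Real.pi / 2 * s))⁻¹).congr (ae_of_all _ fun ω => ?_)
    simp only
    rw [mul_assoc, mul_inv_cancel₀ hcos.ne', mul_one]
  refine ⟨hInt, ?_⟩
  have hE2 : Tendsto (fun n => ∫ ω, ssq s (e n) (X ω) ∂μ) atTop
      (𝓝 (∫ ω, Real.exp (s * -Real.log |X ω|) * Real.cos (Real.pi / 2 * s) ∂μ)) := by
    refine tendsto_integral_of_dominated_convergence _
      (fun n => ((ssq_meas s (e n)).comp hX).aestronglyMeasurable) hInt (fun n => ?_) ?_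
    · filter_upwards [hX0] with ω hω using ssq_le s (e n) (X ω) hs hω
    · filter_upwards [hX0] with ω hω using ssq_tendsto s (X ω) hω
  have := tendsto_nhds_unique hE2 hE
  rw [integral_mul_const] at this
  rw [this]; field_simp
/-- Hurwitz-type sums -/
noncomputable def ssz (k : ℕ) (x : ℝ) : ℝ := ∑' n : ℕ, 1 / ((n:ℝ) + 1 + x) ^ k

/-- digamma -/
noncomputable def ssg1 (x : ℝ) : ℝ :=
  -Real.eulerMascheroniConstant + ∑' n : ℕ, (1 / ((n:ℝ) + 1) - 1 / ((n:ℝ) + 1 + x))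

/-- log gamma -/
noncomputable def ssg0 (x : ℝ) : ℝ :=
  -Real.eulerMascheroniConstant * x +
    ∑' n : ℕ, (x / ((n:ℝ) + 1) - (Real.log ((n:ℝ) + 1 + x) - Real.log ((n:ℝ) + 1)))

lemma ss_sum (k : ℕ) (hk : 2 ≤ k) (C : ℝ) : Summable (fun n : ℕ => C * (1 / ((n:ℝ) + 1) ^ k)) := by
  apply Summable.mul_left
  have := (Real.summable_one_div_nat_pow (p := k)).2 (by omega)
  simpa using (summable_nat_add_iff 1).2 this

lemma ss_lb (n : ℕ) (x : ℝ) (hx : -(1/2) < x) : ((n:ℝ) + 1) / 2 ≤ (n:ℝ) + 1 + x := by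
  have : (0:ℝ) ≤ n := Nat.cast_nonneg n
  linarith

lemma ss_pos (n : ℕ) (x : ℝ) (hx : -(1/2) < x) : 0 < (n:ℝ) + 1 + x := by
  have : (0:ℝ) ≤ n := Nat.cast_nonneg n
  linarith

lemma ss_bd (k n : ℕ) (x : ℝ) (hx : -(1/2) < x) :
    1 / ((n:ℝ) + 1 + x) ^ k ≤ 2 ^ k * (1 / ((n:ℝ) + 1) ^ k) := by
  have h : (0:ℝ) < (n:ℝ) + 1 := by positivity
  calc 1 / ((n:ℝ) + 1 + x) ^ k ≤ 1 / (((n:ℝ) + 1) / 2) ^ k := by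
        apply one_div_le_one_div_of_le (by positivity)
        exact pow_le_pow_left₀ (by positivity) (ss_lb n x hx) k
    _ = _ := by rw [div_pow]; field_simp

lemma ssz_deriv (k : ℕ) (hk : 2 ≤ k) (x : ℝ) (hx : -(1/2) < x) :
    HasDerivAt (ssz k) (-k * ssz (k+1) x) x := by
  have h := hasDerivAt_tsum_of_isPreconnected (t := Ioi (-(1/2) : ℝ)) (y₀ := 0) (y := x)
    (g := fun (n : ℕ) (x : ℝ) => 1 / ((n:ℝ) + 1 + x) ^ k)
    (g' := fun (n : ℕ) (x : ℝ) => -k * (1 / ((n:ℝ) + 1 + x) ^ (k+1)))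
    (u := fun n : ℕ => (k * 2 ^ (k+1)) * (1 / ((n:ℝ) + 1) ^ (k+1)))
    (ss_sum _ (by omega) _) isOpen_Ioi isPreconnected_Ioi ?_ ?_ (by simp) ?_ hx
  · rw [tsum_mul_left] at h
    exact h
  · intro n y hy
    have hp := ss_pos n y hy
    have h1 : HasDerivAt (fun y => ((n:ℝ) + 1 + y) ^ k) (k * ((n:ℝ) + 1 + y) ^ (k-1) * 1) y :=
      ((hasDerivAt_id y).const_add ((n:ℝ) + 1)).pow k
    have h2 := h1.inv (by positivity)
    simp only [one_div]
    refine h2.congr_deriv ?_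
    obtain ⟨j, rfl⟩ : ∃ j, k = j + 1 := ⟨k - 1, by omega⟩
    simp only [Nat.add_sub_cancel]
    field_simp
    ring
  · intro n y hy
    have hp := ss_pos n y hy
    rw [norm_mul, Real.norm_of_nonneg (by positivity : 0 ≤ 1 / ((n:ℝ) + 1 + y) ^ (k+1))]
    have := ss_bd (k+1) n y hy
    calc _ = (k:ℝ) * (1 / ((n:ℝ) + 1 + y) ^ (k+1)) := by simp
      _ ≤ k * (2 ^ (k+1) * (1 / ((n:ℝ) + 1) ^ (k+1))) := by gcongr
      _ = _ := by ring
  · simpa using ss_sum k hk 1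

lemma ssg1_deriv (x : ℝ) (hx : -(1/2) < x) : HasDerivAt ssg1 (ssz 2 x) x := by
  have h := hasDerivAt_tsum_of_isPreconnected (t := Ioi (-(1/2) : ℝ)) (y₀ := 0) (y := x)
    (g := fun (n : ℕ) (x : ℝ) => 1 / ((n:ℝ) + 1) - 1 / ((n:ℝ) + 1 + x))
    (g' := fun (n : ℕ) (x : ℝ) => (1 / ((n:ℝ) + 1 + x) ^ 2))
    (u := fun n : ℕ => (2 ^ 2) * (1 / ((n:ℝ) + 1) ^ 2))
    (ss_sum _ (by omega) _) isOpen_Ioi isPreconnected_Ioi ?_ ?_ (by simp) ?_ hx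
  · exact h.const_add _
  · intro n y hy
    have hp := ss_pos n y hy
    have h2 := (((hasDerivAt_id y).const_add ((n:ℝ) + 1)).inv (by simpa using hp.ne')).const_sub (1 / ((n:ℝ) + 1))
    simp only [one_div]
    simp only [one_div] at h2
    refine h2.congr_deriv ?_
    simp [neg_div]
  · intro n y hy
    have hp := ss_pos n y hy
    rw [Real.norm_of_nonneg (by positivity)]
    exact ss_bd 2 n y hy
  · simp

lemma ssg0_aux (x : ℝ) (hx : -(1/2) < x) : HasDerivAt ssg0 (ssg1 x) x ∧
    Summable (fun n : ℕ => (x / ((n:ℝ) + 1) - (Real.log ((n:ℝ) + 1 + x) - Real.log ((n:ℝ) + 1)))) := by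
  have hu : Summable (fun n : ℕ => (2 * (|x| + 1)) * (1 / ((n:ℝ) + 1) ^ 2)) := ss_sum 2 le_rfl _
  have hg : ∀ (n : ℕ) (y : ℝ), y ∈ Ioo (-(1/2) : ℝ) (|x| + 1) →
      HasDerivAt (fun x => x / ((n:ℝ) + 1) - (Real.log ((n:ℝ) + 1 + x) - Real.log ((n:ℝ) + 1)))
      (1 / ((n:ℝ) + 1) - 1 / ((n:ℝ) + 1 + y)) y := by
    intro n y hy
    have hp := ss_pos n y hy.1
    have h1 := (((hasDerivAt_id y).const_add ((n:ℝ) + 1)).log (by simpa using hp.ne')).sub_const (Real.log ((n:ℝ) + 1))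
    exact ((hasDerivAt_id y).div_const _).sub h1
  have hb : ∀ (n : ℕ) (y : ℝ), y ∈ Ioo (-(1/2) : ℝ) (|x| + 1) →
      ‖1 / ((n:ℝ) + 1) - 1 / ((n:ℝ) + 1 + y)‖ ≤ (2 * (|x| + 1)) * (1 / ((n:ℝ) + 1) ^ 2) := by
    intro n y hy
    have hp := ss_pos n y hy.1
    have hn : (0:ℝ) < (n:ℝ) + 1 := by positivity
    have e : 1 / ((n:ℝ) + 1) - 1 / ((n:ℝ) + 1 + y) = y * (1 / ((n:ℝ) + 1)) * (1 / ((n:ℝ) + 1 + y)) := by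
      field_simp; ring
    have hy' : |y| ≤ |x| + 1 := by
      have := abs_nonneg x
      rw [abs_le]; constructor <;> linarith [hy.1, hy.2]
    have hbd := ss_bd 1 n y hy.1
    rw [e, norm_mul, norm_mul, Real.norm_of_nonneg (by positivity : 0 ≤ 1 / ((n:ℝ) + 1)),
      Real.norm_of_nonneg (by positivity : 0 ≤ 1 / ((n:ℝ) + 1 + y)), Real.norm_eq_abs]
    simp only [pow_one] at hbd
    calc _ ≤ (|x| + 1) * (1 / ((n:ℝ) + 1)) * (2 * (1 / ((n:ℝ) + 1))) := by gcongr
      _ = _ := by field_simp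
  have h0 : (0:ℝ) ∈ Ioo (-(1/2) : ℝ) (|x| + 1) := ⟨by norm_num, by positivity⟩
  have hx' : x ∈ Ioo (-(1/2) : ℝ) (|x| + 1) := ⟨hx, by linarith [le_abs_self x]⟩
  have hs0 : Summable (fun n : ℕ => ((0:ℝ) / ((n:ℝ) + 1) - (Real.log ((n:ℝ) + 1 + 0) - Real.log ((n:ℝ) + 1)))) := by
    simp
  constructor
  · have h := hasDerivAt_tsum_of_isPreconnected hu isOpen_Ioo isPreconnected_Ioo hg hb h0 hs0 hx'
    have h2 := ((hasDerivAt_id x).const_mul (-Real.eulerMascheroniConstant)).add h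
    refine h2.congr_deriv ?_
    simp [ssg1]
  · exact summable_of_summable_hasDerivAt_of_isPreconnected
      (g := fun (n : ℕ) (x : ℝ) => x / ((n:ℝ) + 1) - (Real.log ((n:ℝ) + 1 + x) - Real.log ((n:ℝ) + 1)))
      (g' := fun (n : ℕ) (y : ℝ) => 1 / ((n:ℝ) + 1) - 1 / ((n:ℝ) + 1 + y)) hu isOpen_Ioo isPreconnected_Ioo hg hb h0 hs0 hx'

lemma ssg0_eq (x : ℝ) (hx : -(1/2) < x) : Real.log (Real.Gamma (1 + x)) = ssg0 x := by
  have hx1 : 0 < 1 + x := by linarith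
  have h1 := Real.BohrMollerup.tendsto_log_gamma hx1
  have h2 := ((ssg0_aux x hx).2.hasSum.tendsto_sum_nat).comp (tendsto_add_atTop_nat 1)
  have h3 := (Real.tendsto_harmonic_sub_log.comp (tendsto_add_atTop_nat 1)).const_mul x
  have h4 := (Real.tendsto_log_nat_add_one_sub_log).const_mul (1 + x)
  have h5 := (h2.sub h3).sub h4
  have h6 : Tendsto (Real.BohrMollerup.logGammaSeq (1 + x)) atTop (𝓝 (∑' n : ℕ, (x / ((n:ℝ) + 1) -
      (Real.log ((n:ℝ) + 1 + x) - Real.log ((n:ℝ) + 1))) - x * Real.eulerMascheroniConstant - (1 + x) * 0)) := by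
    refine h5.congr fun n => ?_
    simp only [Function.comp, Real.BohrMollerup.logGammaSeq]
    rw [Finset.sum_sub_distrib, Finset.sum_sub_distrib]
    have e1 : ∑ i ∈ Finset.range (n+1), x / ((i:ℝ) + 1) = x * (harmonic (n+1) : ℝ) := by
      simp [harmonic, Finset.mul_sum, div_eq_mul_inv]
    have e2 : ∑ i ∈ Finset.range (n+1), Real.log ((i:ℝ) + 1) = Real.log (n.factorial) + Real.log ((n:ℝ) + 1) := by
      rw [← Real.log_prod (fun i _ => by positivity), ← Real.log_mul (by positivity) (by positivity)]
      congr 1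
      rw [← Finset.prod_range_add_one_eq_factorial, Finset.prod_range_succ]
      push_cast; rfl
    have e3 : ∑ i ∈ Finset.range (n+1), Real.log ((i:ℝ) + 1 + x) = ∑ i ∈ Finset.range (n+1), Real.log (1 + x + (i:ℝ)) :=
      Finset.sum_congr rfl fun i _ => by congr 1; ring
    rw [e1, e2, e3]
    push_cast
    ring
  rw [tendsto_nhds_unique h1 h6, ssg0]
  ring

lemma ssz_zero (k : ℕ) (hk : 2 ≤ k) : HasSum (fun n : ℕ => 1 / (n:ℝ) ^ k) (ssz k 0) := by
  have h1 := (Real.summable_one_div_nat_pow (p := k)).2 (by omega)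
  have h2 := h1.hasSum
  rw [h1.tsum_eq_zero_add] at h2
  simpa [ssz, zero_pow (by omega : k ≠ 0)] using h2

lemma ssz_zetaR (k : ℕ) (hk : 2 ≤ k) : zetaR k = ssz k 0 := by
  rw [zetaR]
  have h := zeta_nat_eq_tsum_of_gt_one (k := k) (by omega)
  have h2 := (ssz_zero k hk).tsum_eq
  have : riemannZeta ((k:ℝ):ℂ) = ((ssz k 0 : ℝ) : ℂ) := by
    rw [← h2]; push_cast; exact h
  rw [this, Complex.ofReal_re]

lemma ssz_two : ssz 2 0 = Real.pi ^ 2 / 6 := (ssz_zero 2 le_rfl).unique hasSum_zeta_two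
lemma ssz_four : ssz 4 0 = Real.pi ^ 4 / 90 := (ssz_zero 4 (by norm_num)).unique hasSum_zeta_four
lemma ssg1_zero : ssg1 0 = -Real.eulerMascheroniConstant := by simp [ssg1]
/-- derivatives of log gamma -/
noncomputable def ssG : ℕ → ℝ → ℝ
  | 0 => ssg0
  | 1 => ssg1
  | (k+2) => fun x => (-1) ^ k * ((k+1).factorial : ℝ) * ssz (k+2) x

lemma ssG_deriv (n : ℕ) (x : ℝ) (hx : -(1/2) < x) : HasDerivAt (ssG n) (ssG (n+1) x) x := by
  match n with
  | 0 => exact (ssg0_aux x hx).1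
  | 1 => simpa [ssG] using ssg1_deriv x hx
  | (k+2) =>
    have := (ssz_deriv (k+2) (by omega) x hx).const_mul ((-1) ^ k * ((k+1).factorial : ℝ))
    refine this.congr_deriv ?_
    simp only [ssG, Nat.factorial_succ (k+1)]
    push_cast
    ring

/-- derivatives of log cos -/
noncomputable def ssT : ℕ → ℝ → ℝ
  | 0 => fun x => Real.log (Real.cos x)
  | 1 => fun x => -Real.tan x
  | 2 => fun x => -(1 + Real.tan x ^ 2)
  | 3 => fun x => -(2 * Real.tan x + 2 * Real.tan x ^ 3)
  | 4 => fun x => -(2 + 8 * Real.tan x ^ 2 + 6 * Real.tan x ^ 4)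
  | 5 => fun x => -(16 * Real.tan x + 40 * Real.tan x ^ 3 + 24 * Real.tan x ^ 5)
  | _ => fun x => -((16 + 120 * Real.tan x ^ 2 + 120 * Real.tan x ^ 4) * (1 + Real.tan x ^ 2))

lemma ssT_deriv (n : ℕ) (hn : n < 6) (x : ℝ) (hx : 0 < Real.cos x) : HasDerivAt (ssT n) (ssT (n+1) x) x := by
  have ht : HasDerivAt Real.tan (1 + Real.tan x ^ 2) x := by
    refine (Real.hasDerivAt_tan hx.ne').congr_deriv ?_
    rw [Real.tan_eq_sin_div_cos]
    field_simp
    linarith [Real.sin_sq_add_cos_sq x]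
  match n with
  | 0 =>
    refine ((Real.hasDerivAt_cos x).log hx.ne').congr_deriv ?_
    simp [ssT, Real.tan_eq_sin_div_cos, neg_div]
  | 1 => exact ht.neg
  | 2 =>
    refine ((ht.pow 2).const_add 1).neg.congr_deriv ?_
    simp [ssT]; ring
  | 3 =>
    refine ((ht.const_mul 2).add ((ht.pow 3).const_mul 2)).neg.congr_deriv ?_
    simp [ssT]; ring
  | 4 =>
    refine ((((ht.pow 2).const_mul 8).const_add 2).add ((ht.pow 4).const_mul 6)).neg.congr_deriv ?_
    simp [ssT]; ring
  | 5 =>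
    refine (((ht.const_mul 16).add ((ht.pow 3).const_mul 40)).add ((ht.pow 5).const_mul 24)).neg.congr_deriv ?_
    simp [ssT]; ring

/-- linear part -/
noncomputable def ssA (a : ℝ) : ℕ → ℝ → ℝ
  | 0 => fun x => a * x
  | 1 => fun _ => a
  | _ => fun _ => 0

lemma ssA_deriv (a : ℝ) (n : ℕ) (x : ℝ) : HasDerivAt (ssA a n) (ssA a (n+1) x) x := by
  match n with
  | 0 => simpa [ssA] using (hasDerivAt_id x).const_mul a
  | 1 => exact hasDerivAt_const x a
  | (k+2) => exact hasDerivAt_const x 0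

lemma ss_scale (F : ℕ → ℝ → ℝ) (n : ℕ) (b x : ℝ) (h : HasDerivAt (F n) (F (n+1) (b*x)) (b*x)) :
    HasDerivAt (fun x => b ^ n * F n (b * x)) (b ^ (n+1) * F (n+1) (b * x)) x := by
  have h1 : HasDerivAt (fun x => b * x) b x := by simpa using (hasDerivAt_id x).const_mul b
  refine ((h.comp x h1).const_mul (b ^ n)).congr_deriv ?_
  ring

/-- derivatives of the cumulant function -/
noncomputable def ssL (β a b c : ℝ) (n : ℕ) (x : ℝ) : ℝ :=
  β ^ n * ssG n (β * x) - ssG n x + ssA a n x + b ^ n * ssT n (b * x) - c ^ n * ssT n (c * x)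

lemma ssL_deriv (β a b c : ℝ) (n : ℕ) (hn : n < 6) (x : ℝ) (h1 : -(1/2) < β * x) (h2 : -(1/2) < x)
    (h3 : 0 < Real.cos (b * x)) (h4 : 0 < Real.cos (c * x)) :
    HasDerivAt (ssL β a b c n) (ssL β a b c (n+1) x) x :=
  ((((ss_scale ssG n β x (ssG_deriv n _ h1)).sub (ssG_deriv n x h2)).add (ssA_deriv a n x)).add
    (ss_scale ssT n b x (ssT_deriv n hn _ h3))).sub (ss_scale ssT n c x (ssT_deriv n hn _ h4))

lemma ss_bell (M L : ℕ → ℝ → ℝ) (m l : ℕ → ℝ) (δ : ℝ) (hδ : 0 < δ)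
    (hM : ∀ n < 5, ∀ s ∈ Ioo 0 δ, HasDerivAt (M n) (M (n+1) s) s)
    (hL : ∀ n < 5, ∀ s ∈ Ioo 0 δ, HasDerivAt (L n) (L (n+1) s) s)
    (hML : ∀ s ∈ Ioo 0 δ, M 0 s = Real.exp (L 0 s))
    (hm : ∀ n ≤ 5, Tendsto (M n) (𝓝[>] 0) (𝓝 (m n)))
    (hl : ∀ n ≤ 5, Tendsto (L n) (𝓝[>] 0) (𝓝 (l n))) (hm0 : m 0 = 1) :
    m 5 = l 1 ^ 5 + 10 * l 1 ^ 3 * l 2 + 10 * l 1 ^ 2 * l 3 + 15 * l 1 * l 2 ^ 2 + 5 * l 1 * l 4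
      + 10 * l 2 * l 3 + l 5 := by
  have hev : ∀ s ∈ Ioo (0:ℝ) δ, Ioo 0 δ ∈ 𝓝 s := fun s hs => isOpen_Ioo.mem_nhds hs
  have key : ∀ n < 5, ∀ R : ℝ → ℝ, ∀ R' : ℝ → ℝ, (∀ s ∈ Ioo 0 δ, M n s = R s) →
      (∀ s ∈ Ioo 0 δ, HasDerivAt R (R' s) s) → ∀ s ∈ Ioo 0 δ, M (n+1) s = R' s := by
    intro n hn R R' h1 h2 s hs
    refine (hM n hn s hs).unique ((h2 s hs).congr_of_eventuallyEq ?_)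
    filter_upwards [hev s hs] with t ht using h1 t ht
  have e1 : ∀ s ∈ Ioo 0 δ, M 1 s = L 1 s * M 0 s :=
    key 0 (by norm_num) _ _ hML fun s hs =>
      ((hL 0 (by norm_num) s hs).exp).congr_deriv (by rw [hML s hs]; ring)
  have e2 : ∀ s ∈ Ioo 0 δ, M 2 s = L 2 s * M 0 s + L 1 s * M 1 s :=
    key 1 (by norm_num) _ _ e1 fun s hs =>
      (hL 1 (by norm_num) s hs).mul (hM 0 (by norm_num) s hs)
  have e3 : ∀ s ∈ Ioo 0 δ, M 3 s = L 3 s * M 0 s + 2 * (L 2 s * M 1 s) + L 1 s * M 2 s :=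
    key 2 (by norm_num) _ _ e2 fun s hs =>
      (((hL 2 (by norm_num) s hs).mul (hM 0 (by norm_num) s hs)).add
      ((hL 1 (by norm_num) s hs).mul (hM 1 (by norm_num) s hs))).congr_deriv (by ring)
  have e4 : ∀ s ∈ Ioo 0 δ, M 4 s = L 4 s * M 0 s + 3 * (L 3 s * M 1 s) + 3 * (L 2 s * M 2 s)
      + L 1 s * M 3 s :=
    key 3 (by norm_num) _ _ e3 fun s hs =>
      ((((hL 3 (by norm_num) s hs).mul (hM 0 (by norm_num) s hs)).add
      (((hL 2 (by norm_num) s hs).mul (hM 1 (by norm_num) s hs)).const_mul 2)).add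
      ((hL 1 (by norm_num) s hs).mul (hM 2 (by norm_num) s hs))).congr_deriv (by ring)
  have e5 : ∀ s ∈ Ioo 0 δ, M 5 s = L 5 s * M 0 s + 4 * (L 4 s * M 1 s) + 6 * (L 3 s * M 2 s)
      + 4 * (L 2 s * M 3 s) + L 1 s * M 4 s :=
    key 4 (by norm_num) _ _ e4 fun s hs =>
      (((((hL 4 (by norm_num) s hs).mul (hM 0 (by norm_num) s hs)).add
      (((hL 3 (by norm_num) s hs).mul (hM 1 (by norm_num) s hs)).const_mul 3)).add
      (((hL 2 (by norm_num) s hs).mul (hM 2 (by norm_num) s hs)).const_mul 3)).add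
      ((hL 1 (by norm_num) s hs).mul (hM 3 (by norm_num) s hs))).congr_deriv (by ring)
  have lim : ∀ n ≤ 5, ∀ R : ℝ → ℝ, ∀ r : ℝ, (∀ s ∈ Ioo 0 δ, M n s = R s) →
      Tendsto R (𝓝[>] 0) (𝓝 r) → m n = r := by
    intro n hn R r h1 h2
    refine tendsto_nhds_unique (hm n hn) (h2.congr' ?_)
    filter_upwards [Ioo_mem_nhdsGT hδ] with s hs using (h1 s hs).symm
  have T : ∀ i ≤ 5, ∀ j ≤ 5, Tendsto (fun s => L i s * M j s) (𝓝[>] 0) (𝓝 (l i * m j)) :=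
    fun i hi j hj => (hl i hi).mul (hm j hj)
  have f1 := lim 1 (by norm_num) _ _ e1 (T 1 (by norm_num) 0 (by norm_num))
  have f2 := lim 2 (by norm_num) _ _ e2 ((T 2 (by norm_num) 0 (by norm_num)).add
    (T 1 (by norm_num) 1 (by norm_num)))
  have f3 := lim 3 (by norm_num) _ _ e3 (((T 3 (by norm_num) 0 (by norm_num)).add
    ((T 2 (by norm_num) 1 (by norm_num)).const_mul 2)).add (T 1 (by norm_num) 2 (by norm_num)))
  have f4 := lim 4 (by norm_num) _ _ e4 ((((T 4 (by norm_num) 0 (by norm_num)).add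
    ((T 3 (by norm_num) 1 (by norm_num)).const_mul 3)).add
    ((T 2 (by norm_num) 2 (by norm_num)).const_mul 3)).add (T 1 (by norm_num) 3 (by norm_num)))
  have f5 := lim 5 (by norm_num) _ _ e5 (((((T 5 (by norm_num) 0 (by norm_num)).add
    ((T 4 (by norm_num) 1 (by norm_num)).const_mul 4)).add
    ((T 3 (by norm_num) 2 (by norm_num)).const_mul 6)).add
    ((T 2 (by norm_num) 3 (by norm_num)).const_mul 4)).add (T 1 (by norm_num) 4 (by norm_num)))
  rw [f5, f4, f3, f2, f1, hm0]
  ring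

lemma ss_moment_lim {Ω : Type*} [MeasurableSpace Ω] (μ : Measure Ω) (Y : Ω → ℝ) (hY : Measurable Y)
    (hp : ∀ p : ℕ, Integrable (fun ω => |Y ω| ^ p) μ) (s₀ : ℝ) (hs₀ : 0 < s₀)
    (hd : ∀ n : ℕ, Integrable (fun ω => |Y ω| ^ n * Real.exp (s₀ * Y ω)) μ) (n : ℕ) :
    Tendsto (fun s => ∫ ω, Y ω ^ n * Real.exp (s * Y ω) ∂μ) (𝓝[>] 0) (𝓝 (∫ ω, Y ω ^ n ∂μ)) := by
  refine tendsto_integral_filter_of_dominated_convergence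
    (fun ω => |Y ω| ^ n * Real.exp (s₀ * Y ω) + |Y ω| ^ n) ?_ ?_ ((hd n).add (hp n)) ?_
  · refine Eventually.of_forall fun s => ?_
    have : Measurable fun ω => Y ω ^ n * Real.exp (s * Y ω) := by fun_prop
    exact this.aestronglyMeasurable
  · filter_upwards [Ioo_mem_nhdsGT hs₀] with s hs
    refine ae_of_all _ fun ω => ?_
    rw [norm_mul, norm_pow, Real.norm_eq_abs, Real.norm_eq_abs, Real.abs_exp]
    have hn : 0 ≤ |Y ω| ^ n := by positivity
    have : Real.exp (s * Y ω) ≤ Real.exp (s₀ * Y ω) + 1 := by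
      rcases le_total 0 (Y ω) with h | h
      · have : Real.exp (s * Y ω) ≤ Real.exp (s₀ * Y ω) := by
          apply Real.exp_le_exp.2; nlinarith [hs.2]
        linarith
      · have : Real.exp (s * Y ω) ≤ 1 := by
          apply Real.exp_le_one_iff.2; nlinarith [hs.1]
        have := Real.exp_pos (s₀ * Y ω)
        linarith
    nlinarith
  · refine ae_of_all _ fun ω => ?_
    have : ContinuousAt (fun s : ℝ => Y ω ^ n * Real.exp (s * Y ω)) 0 := by fun_prop
    have := this.tendsto
    simp only [zero_mul, Real.exp_zero, mul_one] at this
    exact this.mono_left nhdsWithin_le_nhds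

lemma ss_core {Ω : Type*} [MeasurableSpace Ω] (μ : Measure Ω) [IsProbabilityMeasure μ]
    (Y : Ω → ℝ) (hY : Measurable Y) (hp : ∀ p : ℕ, Integrable (fun ω => |Y ω| ^ p) μ)
    (β θ a : ℝ) (hβ : 0 < β) (hθ : |θ| ≤ 1)
    (hM : ∀ s : ℝ, 0 < s → s < 1 → Integrable (fun ω => Real.exp (s * Y ω)) μ ∧
      (∫ ω, Real.exp (s * Y ω) ∂μ) * Real.cos (Real.pi/2*s) * Real.Gamma s =
        β * (Real.exp (a * s) * Real.cos (Real.pi/2*θ*s)) * Real.Gamma (β * s)) :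
    ∃ l : ℕ → ℝ, l 1 = a + Real.eulerMascheroniConstant * (1 - β) ∧
      l 2 = (β^2-1) * (Real.pi^2/6) - (Real.pi/2*θ)^2 + (Real.pi/2)^2 ∧
      l 3 = -2 * (β^3-1) * zetaR 3 ∧
      l 4 = 6*(β^4-1)*(Real.pi^4/90) - 2*(Real.pi/2*θ)^4 + 2 * (Real.pi/2)^4 ∧
      l 5 = -24*(β^5-1)*zetaR 5 ∧
      ∫ ω, Y ω ^ 5 ∂μ = l 1 ^ 5 + 10 * l 1 ^ 3 * l 2 + 10 * l 1 ^ 2 * l 3 + 15 * l 1 * l 2 ^ 2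
        + 5 * l 1 * l 4 + 10 * l 2 * l 3 + l 5 := by
  have z3 : zetaR 3 = ssz 3 0 := by exact_mod_cast ssz_zetaR 3 (by norm_num)
  have z5 : zetaR 5 = ssz 5 0 := by exact_mod_cast ssz_zetaR 5 (by norm_num)
  have hpi := Real.pi_pos
  have hint : Ioo (0:ℝ) 1 ⊆ interior (integrableExpSet Y μ) := by
    apply interior_maximal _ isOpen_Ioo
    intro s hs
    exact (hM s hs.1 hs.2).1
  have hcos1 : ∀ s : ℝ, 0 < s → s < 1 → 0 < Real.cos (Real.pi/2*s) := by
    intro s h0 h1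
    apply Real.cos_pos_of_mem_Ioo
    constructor <;> nlinarith
  have hcos2 : ∀ s : ℝ, 0 < s → s < 1 → 0 < Real.cos (Real.pi/2*θ*s) := by
    intro s h0 h1
    obtain ⟨t1, t2⟩ := abs_le.1 hθ
    have h3 : |θ * s| < 1 := by
      rw [abs_mul, abs_of_pos h0]; nlinarith [abs_nonneg θ]
    obtain ⟨t1, t2⟩ := abs_lt.1 h3
    apply Real.cos_pos_of_mem_Ioo
    constructor <;> nlinarith
  refine ⟨fun n => ssL β a (Real.pi/2*θ) (Real.pi/2) n 0, ?_, ?_, ?_, ?_, ?_, ?_⟩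
  · simp [ssL, ssG, ssA, ssT, ssg1_zero]; ring
  · simp [ssL, ssG, ssA, ssT, ssz_two]; ring
  · simp [ssL, ssG, ssA, ssT, z3, Nat.factorial]; ring
  · simp [ssL, ssG, ssA, ssT, ssz_four, Nat.factorial]; ring
  · simp [ssL, ssG, ssA, ssT, z5, Nat.factorial]; ring
  · have hb := ss_bell (fun n s => ∫ ω, Y ω ^ n * Real.exp (s * Y ω) ∂μ)
      (ssL β a (Real.pi/2*θ) (Real.pi/2)) (fun n => ∫ ω, Y ω ^ n ∂μ)
      (fun n => ssL β a (Real.pi/2*θ) (Real.pi/2) n 0) 1 one_pos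
    beta_reduce at hb ⊢
    refine hb ?_ ?_ ?_ ?_ ?_ ?_
    · intro n _ s hs
      exact hasDerivAt_integral_pow_mul_exp_real (hint hs) n
    · intro n hn s hs
      exact ssL_deriv _ _ _ _ n (by omega) s (by nlinarith [mul_pos hβ hs.1]) (by linarith [hs.1])
        (hcos2 s hs.1 hs.2) (hcos1 s hs.1 hs.2)
    · intro s hs
      have h := (hM s hs.1 hs.2).2
      have c1 := hcos1 s hs.1 hs.2
      have c2 := hcos2 s hs.1 hs.2
      have hs0 := hs.1
      have hbs := mul_pos hβ hs0
      have g1 : Real.Gamma (1 + s) = s * Real.Gamma s := by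
        rw [add_comm, Real.Gamma_add_one hs0.ne']
      have g2 : Real.Gamma (1 + β * s) = β * s * Real.Gamma (β * s) := by
        rw [add_comm, Real.Gamma_add_one hbs.ne']
      have G1 : 0 < Real.Gamma (1 + s) := Real.Gamma_pos_of_pos (by linarith)
      have G2 : 0 < Real.Gamma (1 + β * s) := Real.Gamma_pos_of_pos (by linarith)
      have e : ssL β a (Real.pi/2*θ) (Real.pi/2) 0 s = Real.log (Real.Gamma (1 + β * s))
          - Real.log (Real.Gamma (1 + s)) + a * s + Real.log (Real.cos (Real.pi/2*θ*s))
          - Real.log (Real.cos (Real.pi/2*s)) := by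
        rw [ssg0_eq _ (by linarith), ssg0_eq _ (by linarith)]
        simp [ssL, ssG, ssA, ssT]
      simp only [pow_zero, one_mul]
      rw [e, Real.exp_sub, Real.exp_add, Real.exp_add, Real.exp_sub, Real.exp_log G1,
        Real.exp_log G2, Real.exp_log c1, Real.exp_log c2, eq_div_iff c1.ne']
      generalize Real.cos (Real.pi/2*s) = C1 at h ⊢
      generalize Real.cos (Real.pi/2*θ*s) = C2 at h ⊢
      rw [div_mul_eq_mul_div, div_mul_eq_mul_div, eq_div_iff G1.ne', g1, g2]
      linear_combination s * h
    · intro n _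
      have hh : (1/2:ℝ) ∈ interior (integrableExpSet Y μ) := hint ⟨by norm_num, by norm_num⟩
      have hd : ∀ n : ℕ, Integrable (fun ω => |Y ω| ^ n * Real.exp ((1/2) * Y ω)) μ := fun n =>
        integrable_pow_abs_mul_exp_of_mem_interior_integrableExpSet hh n
      exact ss_moment_lim μ Y hY hp (1/2) (by norm_num) hd n
    · intro n hn
      have := (ssL_deriv β a (Real.pi/2*θ) (Real.pi/2) n (by omega) 0 (by norm_num) (by norm_num)
        (by simp) (by simp)).continuousAt
      exact this.tendsto.mono_left nhdsWithin_le_nhds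
    · simp

lemma ss_degen {Ω : Type*} [MeasurableSpace Ω] (μ : Measure Ω) [IsProbabilityMeasure μ]
    (X : Ω → ℝ) (hX : Measurable X) (x₀ : ℝ)
    (hφ : ∀ k : ℝ, k ≠ 0 → ∫ ω, Complex.exp (Complex.I * k * X ω) ∂μ = Complex.exp (Complex.I * k * x₀)) :
    ∀ᵐ ω ∂μ, X ω = x₀ := by
  have : IsProbabilityMeasure (μ.map X) := Measure.isProbabilityMeasure_map hX.aemeasurable
  have h : μ.map X = Measure.dirac x₀ := by
    apply Measure.ext_of_charFun
    ext k
    rw [charFun_apply_real, charFun_apply_real, integral_dirac,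
      integral_map hX.aemeasurable (by fun_prop)]
    by_cases hk : k = 0
    · simp [hk]
    · have := hφ k hk
      calc _ = ∫ ω, Complex.exp (Complex.I * k * X ω) ∂μ := by
            congr 1; ext ω; congr 1; ring
        _ = _ := by rw [this]; congr 1; ring
  have h2 : ∀ᵐ x ∂(μ.map X), x = x₀ := by
    rw [h]; exact (ae_dirac_iff (measurableSet_singleton x₀)).2 rfl
  exact ae_of_ae_map hX.aemeasurable h2

lemma ss_cpos (α θ : ℝ) (hα : 0 < α) (h1 : |θ| ≤ 1) (h2 : |θ| ≤ 2 * (1/α) - 1)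
    (hnd : ¬ (α = 1 ∧ |θ| = 1)) : |α * θ| < 1 := by
  rw [abs_mul, abs_of_pos hα]
  have h3 : α * |θ| ≤ 2 - α := by
    have := mul_le_mul_of_nonneg_left h2 hα.le
    have e : α * (2 * (1/α) - 1) = 2 - α := by field_simp
    linarith
  rcases lt_trichotomy α 1 with h | h | h
  · nlinarith [abs_nonneg θ]
  · subst h
    have : |θ| ≠ 1 := fun h => hnd ⟨rfl, h⟩
    have := lt_of_le_of_ne h1 this
    linarith
  · linarith

lemma ss_nondeg {Ω : Type*} [MeasurableSpace Ω] (μ : Measure Ω) [IsProbabilityMeasure μ]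
    (X : Ω → ℝ) (hX : Measurable X) (hX0 : ∀ᵐ ω ∂μ, X ω ≠ 0) (α θ τ g : ℝ) (hα : 0 < α)
    (hθ : |α * θ| < 1)
    (hφ : ∀ k : ℝ, 0 < k → ∫ ω, Complex.exp (Complex.I * k * X ω) ∂μ =
      Complex.exp (-Complex.exp ((α:ℂ) * ((Real.log k : ℝ) + (τ:ℂ)
        - Complex.I * ((Real.pi / 2 : ℝ) : ℂ) * θ) + (g:ℂ) * ((α:ℂ) - 1)))) (s : ℝ)
    (hs : 0 < s) (hs1 : s < 1) :
    Integrable (fun ω => Real.exp (s * -Real.log |X ω|)) μ ∧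
      (∫ ω, Real.exp (s * -Real.log |X ω|) ∂μ) * Real.cos (Real.pi/2*s) * Real.Gamma s =
        (1/α) * (Real.exp (-(τ + g * (1 - 1/α)) * s) * Real.cos (Real.pi/2*θ*s))
          * Real.Gamma ((1/α) * s) := by
  have hpi := Real.pi_pos
  set w : ℂ := ⟨α * τ + g * (α - 1), -(Real.pi / 2 * (α * θ))⟩ with hw
  obtain ⟨t1, t2⟩ := abs_lt.1 hθ
  have hc : 0 < (Complex.exp w).re := by
    rw [Complex.exp_re]
    refine mul_pos (Real.exp_pos _) (Real.cos_pos_of_mem_Ioo ⟨?_, ?_⟩) <;> simp only [hw] <;> nlinarith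
  have hlog : Complex.log (Complex.exp w) = w := by
    apply Complex.log_exp <;> simp only [hw] <;> nlinarith
  have hm := ss_mellin μ X hX hX0 s α hs hs1 hα (Complex.exp w) hc (by
    intro k hk
    rw [hφ k hk]
    congr 2
    rw [Real.rpow_def_of_pos hk, Complex.ofReal_exp, ← Complex.exp_add]
    congr 1
    apply Complex.ext <;> simp [hw] <;> ring)
  refine ⟨hm.1, ?_⟩
  rw [hm.2, hlog, Complex.exp_re]
  have e1 : (-(((s/α:ℝ):ℂ) * w)).re = -(τ + g * (1 - 1/α)) * s := by
    simp [hw]; field_simp; ring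
  have e2 : (-(((s/α:ℝ):ℂ) * w)).im = Real.pi/2*θ*s := by
    simp [hw]; field_simp
  rw [e1, e2]
  congr 2
  ring

end

theorem fifth_log_moment_of_strictlyStable {Ω : Type*} [MeasureSpace Ω]
    [IsProbabilityMeasure (ℙ : Measure Ω)] (X : Ω → ℝ) (ν θ τ : ℝ)
    (hX : IsStrictlyStable X ν θ τ)
    (DV : ℝ) (hDV : DV = Real.pi ^ 2 / 4 * (1 - θ ^ 2) + Real.pi ^ 2 / 6 * (ν - 1)) :
    (∫ ω, (Real.log |X ω|) ^ 5) =
      τ ^ 5 + 10 * τ ^ 3 * DV + 20 * τ ^ 2 * zetaR 3 * (ν ^ ((3 : ℝ) / 2) - 1)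
        + 15 * τ * DV ^ 2 + 5 * τ * Real.pi ^ 4 * ((1 - θ ^ 4) / 8 + (ν ^ 2 - 1) / 15)
        + 20 * zetaR 3 * (ν ^ ((3 : ℝ) / 2) - 1) * DV
        + 24 * zetaR 5 * (ν ^ ((5 : ℝ) / 2) - 1) := by
  obtain ⟨hm, hν, hθ, h0, hp, hφ⟩ := hX
  have hν0 : 0 < ν := by linarith
  have hθ1 : |θ| ≤ 1 := hθ.trans (min_le_left _ _)
  have hθ2 : |θ| ≤ 2 * Real.sqrt ν - 1 := hθ.trans (min_le_right _ _)
  have hα : 0 < ν ^ (-(1/2) : ℝ) := Real.rpow_pos_of_pos hν0 _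
  have hβα : 1 / ν ^ (-(1/2) : ℝ) = Real.sqrt ν := by
    rw [Real.rpow_neg hν0.le, one_div, inv_inv, Real.sqrt_eq_rpow]
  have hβ : 0 < Real.sqrt ν := Real.sqrt_pos.2 hν0
  have h2 : Real.sqrt ν ^ 2 = ν := Real.sq_sqrt hν0.le
  have h3 : ν ^ ((3 : ℝ) / 2) = Real.sqrt ν ^ 3 := by
    rw [Real.sqrt_eq_rpow, ← Real.rpow_natCast, ← Real.rpow_mul hν0.le]; norm_num
  have h5 : ν ^ ((5 : ℝ) / 2) = Real.sqrt ν ^ 5 := by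
    rw [Real.sqrt_eq_rpow, ← Real.rpow_natCast, ← Real.rpow_mul hν0.le]; norm_num
  have h0' : ∀ᵐ ω ∂(ℙ : Measure Ω), X ω ≠ 0 := by
    rw [ae_iff]; simpa using h0
  set α := ν ^ (-(1/2) : ℝ) with hαdef
  by_cases hd : α = 1 ∧ |θ| = 1
  · obtain ⟨ha, ht⟩ := hd
    have hs1 : Real.sqrt ν = 1 := by rw [← hβα, ha]; norm_num
    have hν1 : ν = 1 := by rw [← h2, hs1]; norm_num
    have ht2 : θ ^ 2 = 1 := by rw [← sq_abs, ht]; norm_num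
    have ht4 : θ ^ 4 = 1 := by
      calc θ ^ 4 = (θ^2)^2 := by ring
        _ = 1 := by rw [ht2]; norm_num
    have hae := ss_degen (ℙ : Measure Ω) X hm (θ * Real.exp τ) (by
      intro k hk
      rw [hφ k hk, ha]
      congr 1
      have hk' : 0 < |k| := abs_pos.2 hk
      have hsk : Real.sign k * |k| = k := by
        rcases lt_or_gt_of_ne hk with h | h
        · rw [Real.sign_of_neg h, abs_of_neg h]; ring
        · rw [Real.sign_of_pos h, abs_of_pos h]; ring
      have e : ((1:ℝ):ℂ) * (((Real.log |k| : ℝ) : ℂ) + (τ : ℂ) -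
              Complex.I * ((Real.pi / 2 : ℝ) : ℂ) * (θ : ℂ) * ((Real.sign k : ℝ) : ℂ)) +
          ((Real.eulerMascheroniConstant : ℝ) : ℂ) * (((1:ℝ):ℂ) - 1)
          = ((Real.log |k| : ℝ) : ℂ) + ((τ : ℝ) : ℂ) +
            ((-(Real.pi / 2 * (θ * Real.sign k)) : ℝ) : ℂ) * Complex.I := by
        push_cast; ring
      have hu : Complex.exp (((-(Real.pi / 2 * (θ * Real.sign k)) : ℝ) : ℂ) * Complex.I)
          = -(((θ * Real.sign k : ℝ):ℂ) * Complex.I) := by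
        have hsgn : θ * Real.sign k = 1 ∨ θ * Real.sign k = -1 := by
          have : |θ| = 1 := ht
          rcases (abs_eq zero_le_one).1 ht with h | h <;>
          rcases lt_or_gt_of_ne hk with h' | h' <;>
          simp [h, Real.sign_of_neg, Real.sign_of_pos, h']
        rw [Complex.exp_mul_I, ← Complex.ofReal_cos, ← Complex.ofReal_sin]
        rcases hsgn with h | h <;> rw [h] <;> simp
      rw [e, Complex.exp_add, Complex.exp_add, hu, ← Complex.ofReal_exp, ← Complex.ofReal_exp,
        Real.exp_log hk']
      have : (k:ℂ) = ((Real.sign k * |k| : ℝ) : ℂ) := by rw [hsk]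
      rw [this]
      push_cast; ring)
    have hl : (fun ω => (Real.log |X ω|) ^ 5) =ᵐ[(ℙ : Measure Ω)] fun _ => τ ^ 5 := by
      filter_upwards [hae] with ω hω
      rw [hω, abs_mul, ht, one_mul, Real.abs_exp, Real.log_exp]
    rw [integral_congr_ae hl, hDV, hν1, ht2, ht4]
    simp
  · have hc := ss_cpos α θ hα hθ1 (by rw [hβα]; exact hθ2) hd
    have hn := ss_nondeg (ℙ : Measure Ω) X hm h0' α θ τ Real.eulerMascheroniConstant hα hc (by
      intro k hk
      rw [hφ k hk.ne', Real.sign_of_pos hk, abs_of_pos hk]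
      simp)
    rw [hβα] at hn
    obtain ⟨l, l1, l2, l3, l4, l5, hl⟩ := ss_core (ℙ : Measure Ω) (fun ω => -Real.log |X ω|)
      (by fun_prop) (by simpa using hp) (Real.sqrt ν) θ _ hβ hθ1 hn
    have e : ∫ ω, (Real.log |X ω|) ^ 5 = - ∫ ω, (-Real.log |X ω|) ^ 5 := by
      rw [← integral_neg]
      congr 1; ext ω; ring
    have h4 : Real.sqrt ν ^ 4 = ν ^ 2 := by
      calc Real.sqrt ν ^ 4 = (Real.sqrt ν ^ 2)^2 := by ring
        _ = _ := by rw [h2]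
    have l1' : l 1 = -τ := by rw [l1]; ring
    rw [h2] at l2
    rw [h4] at l4
    have l2' : l 2 = DV := by rw [l2, hDV]; ring
    rw [e, hl, l1', l2', l3, l4, l5, h3, h5]
    ring
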